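/- The q-commutator of the raising and lowering angular-momentum operators acts diagonally on the basis of V: for every (π₀,π₁,j) ∈ S, (L⁺ L⁻ − q L⁻ L⁺) e_{π₀,π₁,j} = ( (q^{−3/2−2π₀} + q^{−1/2−w−2j}) / (q⁻¹ − 1) ) e_{π₀,π₁,j}. -/

import Mathlib

/-!
Write `n = π₀ - j` and `F(n) = (1 + q^(n-w)) (1 - q^n) / ((q⁻¹-1)(1-q))`. On a basis vector,
`L⁺L⁻` acts by `q^(-3/2-2π₀) F(n+1)`, and `L⁻L⁺` acts by `q^(-3/2-2π₀) F(n)`; the boundary case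
`j = π₀`, where `L⁺` vanishes, is covered because `F(0) = 0`. Since `F ≥ 0` on `n ≥ 0`, the product
of the two square roots is `F` itself. The claim reduces to the identity
`F(n+1) - q F(n) = (1 + q^(2n+1-w)) / (q⁻¹-1)` (`angCoeff_recurrence`).
-/

/- The irreducible Hilbert-space representation of highest weight `w` of the q-Euclidean
algebra `U_q(e³)` (Theorem 3 of the paper): `S` is the index set of the q-lattice,
`V` the space of finitely supported functions `S → ℂ` with canonical basis `e`,
and `P0, P1, Pm1, Lam, LamInv, K, Lp, Lm` realize the generators
`p⁰, p¹, p⁻¹, Λ, Λ⁻¹, k¹, L^{01}, L^{−1,0}`. -/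

noncomputable section

/-- The q-lattice index set `S = {(π₀,π₁,j) ∈ ℤ³ : π₀ ≥ 0, j ≤ π₀}`. -/
structure SIdx : Type where
  π0 : ℤ
  π1 : ℤ
  j : ℤ
  hπ0 : 0 ≤ π0
  hj : j ≤ π0

instance : DecidableEq SIdx := fun _ _ => Classical.dec _

/-- `V`: finitely supported functions `S → ℂ`. -/
abbrev V : Type := SIdx →₀ ℂ

/-- The canonical basis vector `e_{π₀,π₁,j}`. -/
def e (s : SIdx) : V := Finsupp.single s 1

/-- The linear operator on `V` determined by its values on the canonical basis. -/
def opOf (g : SIdx → V) : V →ₗ[ℂ] V :=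
  Finsupp.lsum ℂ fun s => LinearMap.toSpanSingleton ℂ V (g s)

/-- `P₀ e_{π₀,π₁,j} = ε M (1+q⁻¹)^(1/2) q^(2+π₀+π₁) e_{π₀,π₁,j}`. -/
def P0 (q M ε : ℝ) : V →ₗ[ℂ] V :=
  opOf fun s => ((ε * M * Real.sqrt (1 + q⁻¹) * q ^ (2 + s.π0 + s.π1) : ℝ) : ℂ) • e s

/-- `P₁ e_{π₀,π₁,j} = M (1−q^(2π₀+2))^(1/2) q^(1+π₁) e_{π₀+1,π₁,j+1}`. -/
def P1 (q M : ℝ) : V →ₗ[ℂ] V :=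
  opOf fun s => ((M * Real.sqrt (1 - q ^ (2 * s.π0 + 2)) * q ^ (1 + s.π1) : ℝ) : ℂ) •
    e ⟨s.π0 + 1, s.π1, s.j + 1, by have h0 := s.hπ0; have h1 := s.hj; omega, by have h0 := s.hπ0; have h1 := s.hj; omega⟩

/-- `P₋₁ e_{π₀,π₁,j} = M (1−q^(2π₀))^(1/2) q^(1/2+π₁) e_{π₀−1,π₁,j−1}` (zero if `π₀ = 0`). -/
def Pm1 (q M : ℝ) : V →ₗ[ℂ] V :=
  opOf fun s =>
    if h : 0 < s.π0 then
      ((M * Real.sqrt (1 - q ^ (2 * s.π0)) * q ^ ((1 : ℝ) / 2 + (s.π1 : ℝ)) : ℝ) : ℂ) •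
        e ⟨s.π0 - 1, s.π1, s.j - 1, by have h0 := s.hπ0; have h1 := s.hj; omega, by have h0 := s.hπ0; have h1 := s.hj; omega⟩
    else 0

/-- `Λ e_{π₀,π₁,j} = e_{π₀,π₁+1,j}`. -/
def Lam : V →ₗ[ℂ] V := opOf fun s => e ⟨s.π0, s.π1 + 1, s.j, s.hπ0, s.hj⟩

/-- `Λ⁻¹ e_{π₀,π₁,j} = e_{π₀,π₁−1,j}`. -/
def LamInv : V →ₗ[ℂ] V := opOf fun s => e ⟨s.π0, s.π1 - 1, s.j, s.hπ0, s.hj⟩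

/-- `K e_{π₀,π₁,j} = q^(2j+w) e_{π₀,π₁,j}`. -/
def K (q w : ℝ) : V →ₗ[ℂ] V :=
  opOf fun s => ((q ^ (2 * (s.j : ℝ) + w) : ℝ) : ℂ) • e s

/-- `L⁺ e_{π₀,π₁,j} = q^(−3/2−π₀) [(1+q^(π₀−j−w))(1−q^(π₀−j))/((q⁻¹−1)(1−q))]^(1/2)
    e_{π₀,π₁,j+1}` (zero if `j = π₀`). -/
def Lp (q w : ℝ) : V →ₗ[ℂ] V :=
  opOf fun s =>
    if h : s.j < s.π0 then
      ((q ^ (-(3 : ℝ) / 2 - (s.π0 : ℝ)) *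
          Real.sqrt ((1 + q ^ ((s.π0 : ℝ) - (s.j : ℝ) - w)) *
            (1 - q ^ ((s.π0 : ℝ) - (s.j : ℝ))) / ((q⁻¹ - 1) * (1 - q))) : ℝ) : ℂ) •
        e ⟨s.π0, s.π1, s.j + 1, s.hπ0, by have h0 := s.hπ0; have h1 := s.hj; omega⟩
    else 0

/-- `L⁻ e_{π₀,π₁,j} = q^(−π₀) [(1+q^(π₀−j+1−w))(1−q^(π₀−j+1))/((q⁻¹−1)(1−q))]^(1/2)
    e_{π₀,π₁,j−1}`. -/
def Lm (q w : ℝ) : V →ₗ[ℂ] V :=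
  opOf fun s =>
    ((q ^ (-(s.π0 : ℝ)) *
        Real.sqrt ((1 + q ^ ((s.π0 : ℝ) - (s.j : ℝ) + 1 - w)) *
          (1 - q ^ ((s.π0 : ℝ) - (s.j : ℝ) + 1)) / ((q⁻¹ - 1) * (1 - q))) : ℝ) : ℂ) •
      e ⟨s.π0, s.π1, s.j - 1, s.hπ0, by have h0 := s.hπ0; have h1 := s.hj; omega⟩

theorem opOf_e (g : SIdx → V) (s : SIdx) : opOf g (e s) = g s := by
  simp [opOf, e]

/-- The radicand `F(x) = (1 + q^(x-w)) (1 - q^x) / ((q⁻¹-1)(1-q))` in the matrix elements of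
`L⁺` (at `x = π₀ - j`) and of `L⁻` (at `x = π₀ - j + 1`). -/
def angCoeff (q w x : ℝ) : ℝ :=
  (1 + q ^ (x - w)) * (1 - q ^ x) / ((q⁻¹ - 1) * (1 - q))

theorem angCoeff_nonneg {q w x : ℝ} (hq0 : 0 < q) (hq1 : q < 1) (hx : 0 ≤ x) :
    0 ≤ angCoeff q w x := by
  have h1 : q ^ x ≤ 1 := Real.rpow_le_one hq0.le hq1.le hx
  have h2 : 0 < q ^ (x - w) := Real.rpow_pos_of_pos hq0 _
  have h3 : 1 < q⁻¹ := (one_lt_inv₀ hq0).2 hq1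
  unfold angCoeff
  apply div_nonneg <;> apply mul_nonneg <;> linarith

theorem angCoeff_zero (q w : ℝ) : angCoeff q w 0 = 0 := by
  simp [angCoeff]

theorem angCoeff_recurrence {q : ℝ} (w x : ℝ) (hq0 : 0 < q) (hq1 : q < 1) :
    angCoeff q w (x + 1) - q * angCoeff q w x = (1 + q ^ (2 * x + 1 - w)) / (q⁻¹ - 1) := by
  have h1 : q ^ (x + 1 - w) = q * q ^ x * q ^ (-w) := by
    rw [show x + 1 - w = 1 + x + -w by ring, Real.rpow_add hq0, Real.rpow_add hq0, Real.rpow_one]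
  have h2 : q ^ (x + 1) = q * q ^ x := by
    rw [add_comm, Real.rpow_add hq0, Real.rpow_one]
  have h3 : q ^ (x - w) = q ^ x * q ^ (-w) := by
    rw [sub_eq_add_neg, Real.rpow_add hq0]
  have h4 : q ^ (2 * x + 1 - w) = q * q ^ x * q ^ x * q ^ (-w) := by
    rw [show 2 * x + 1 - w = 1 + x + x + -w by ring, Real.rpow_add hq0, Real.rpow_add hq0,
      Real.rpow_add hq0, Real.rpow_one]
  have h5 : q⁻¹ - 1 ≠ 0 := (sub_pos.2 ((one_lt_inv₀ hq0).2 hq1)).ne'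
  have h6 : 1 - q ≠ 0 := (sub_pos.2 hq1).ne'
  unfold angCoeff
  rw [h1, h2, h3, h4, mul_div_assoc', ← sub_div, div_eq_div_iff (mul_ne_zero h5 h6) h5]
  ring

theorem Lm_e (q w : ℝ) (s : SIdx) (h : s.j - 1 ≤ s.π0) :
    Lm q w (e s) = ((q ^ (-(s.π0 : ℝ)) *
      Real.sqrt (angCoeff q w ((s.π0 : ℝ) - (s.j : ℝ) + 1)) : ℝ) : ℂ) •
        e ⟨s.π0, s.π1, s.j - 1, s.hπ0, h⟩ :=
  opOf_e _ s

theorem Lp_e (q w : ℝ) (s : SIdx) (h : s.j + 1 ≤ s.π0) :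
    Lp q w (e s) = ((q ^ (-(3 : ℝ) / 2 - (s.π0 : ℝ)) *
      Real.sqrt (angCoeff q w ((s.π0 : ℝ) - (s.j : ℝ))) : ℝ) : ℂ) •
        e ⟨s.π0, s.π1, s.j + 1, s.hπ0, h⟩ := by
  rw [Lp, opOf_e, dif_pos (by omega)]
  rfl

theorem Lp_e_of_eq (q w : ℝ) (s : SIdx) (h : s.j = s.π0) : Lp q w (e s) = 0 := by
  rw [Lp, opOf_e, dif_neg (by omega)]

theorem rpow_prefactor {q : ℝ} (hq0 : 0 < q) (a : ℝ) :
    q ^ (-a) * q ^ (-(3 : ℝ) / 2 - a) = q ^ (-(3 : ℝ) / 2 - 2 * a) := by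
  rw [← Real.rpow_add hq0]
  congr 1
  ring

theorem Lp_Lm_e {q : ℝ} (w : ℝ) (hq0 : 0 < q) (hq1 : q < 1) (s : SIdx) :
    Lp q w (Lm q w (e s)) = ((q ^ (-(3 : ℝ) / 2 - 2 * (s.π0 : ℝ)) *
      angCoeff q w ((s.π0 : ℝ) - (s.j : ℝ) + 1) : ℝ) : ℂ) • e s := by
  obtain ⟨a, b, j, ha, hj⟩ := s
  have hj' : (j : ℝ) ≤ a := by exact_mod_cast hj
  rw [Lm_e q w _ (by dsimp only; omega), map_smul, Lp_e q w _ (by dsimp only; omega), smul_smul,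
    ← Complex.ofReal_mul]
  have hs := Real.mul_self_sqrt (angCoeff_nonneg (w := w) (x := (a : ℝ) - j + 1) hq0 hq1
    (by linarith))
  simp only [sub_add_cancel, Int.cast_sub, Int.cast_one]
  rw [show (a : ℝ) - (j - 1) = a - j + 1 by ring, mul_mul_mul_comm, hs, rpow_prefactor hq0]

/-- At `j = π₀` both sides vanish: `L⁺` kills the vector and `F(0) = 0`. -/
theorem Lm_Lp_e {q : ℝ} (w : ℝ) (hq0 : 0 < q) (hq1 : q < 1) (s : SIdx) :
    Lm q w (Lp q w (e s)) = ((q ^ (-(3 : ℝ) / 2 - 2 * (s.π0 : ℝ)) *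
      angCoeff q w ((s.π0 : ℝ) - (s.j : ℝ)) : ℝ) : ℂ) • e s := by
  rcases s.hj.eq_or_lt with h | h
  · rw [Lp_e_of_eq q w s h, h, sub_self, angCoeff_zero]
    simp
  · obtain ⟨a, b, j, ha, hj⟩ := s
    dsimp only at h
    have hj' : (j : ℝ) ≤ a := by exact_mod_cast hj
    rw [Lp_e q w _ (by dsimp only; omega), map_smul, Lm_e q w _ (by dsimp only; omega), smul_smul,
      ← Complex.ofReal_mul]
    have hs := Real.mul_self_sqrt (angCoeff_nonneg (w := w) (x := (a : ℝ) - j) hq0 hq1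
      (by linarith))
    simp only [add_sub_cancel_right, Int.cast_add, Int.cast_one]
    rw [show (a : ℝ) - (j + 1) + 1 = a - j by ring, mul_mul_mul_comm, hs,
      mul_comm (q ^ (-(3 : ℝ) / 2 - (a : ℝ))), rpow_prefactor hq0]

/-- The q-commutator of the raising and lowering angular-momentum
operators acts diagonally:
`(L⁺L⁻ − q L⁻L⁺) e_{π₀,π₁,j} = ((q^(−3/2−2π₀) + q^(−1/2−w−2j))/(q⁻¹−1)) e_{π₀,π₁,j}`. -/
theorem angular_q_commutator_diagonal
    (q M ε w : ℝ) (hq0 : 0 < q) (hq1 : q < 1) (hM : 0 < M)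
    (hε : ε = 1 ∨ ε = -1) (hw : 0 ≤ w) :
    ∀ s : SIdx,
      (Lp q w ∘ₗ Lm q w - (q : ℂ) • (Lm q w ∘ₗ Lp q w)) (e s) =
        (((q ^ (-(3 : ℝ) / 2 - 2 * (s.π0 : ℝ)) + q ^ (-(1 : ℝ) / 2 - w - 2 * (s.j : ℝ))) /
            (q⁻¹ - 1) : ℝ) : ℂ) • e s := by
  intro s
  rw [LinearMap.sub_apply, LinearMap.smul_apply, LinearMap.comp_apply, LinearMap.comp_apply,
    Lp_Lm_e w hq0 hq1, Lm_Lp_e w hq0 hq1, smul_smul, ← Complex.ofReal_mul, ← sub_smul,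
    ← Complex.ofReal_sub]
  congr 2
  have hexp : q ^ (-(1 : ℝ) / 2 - w - 2 * (s.j : ℝ)) =
      q ^ (-(3 : ℝ) / 2 - 2 * (s.π0 : ℝ)) * q ^ (2 * ((s.π0 : ℝ) - (s.j : ℝ)) + 1 - w) := by
    rw [← Real.rpow_add hq0]
    congr 1
    ring
  rw [hexp, mul_left_comm, ← mul_sub, angCoeff_recurrence w _ hq0 hq1]
  ring
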